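/- Let k ≥ 1 and d ≥ 1 be integers. Every tree T with at least one edge admits a graceful-difference (k,d)-total coloring, and also admits an odd-edge graceful-difference (k,d)-total coloring. -/

import Mathlib

/-- `(X, Y)` is a bipartition of the graph `G`: every vertex lies in exactly one of `X, Y`,
and every edge joins a vertex of `X` to a vertex of `Y`. -/
def IsBipartitionOf {V : Type} (G : SimpleGraph V) (X Y : Set V) : Prop :=
  (∀ v : V, v ∈ X ∨ v ∈ Y) ∧ Disjoint X Y ∧
    ∀ ⦃u v : V⦄, G.Adj u v → (u ∈ X ∧ v ∈ Y) ∨ (u ∈ Y ∧ v ∈ X)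

/-- The vertex/edge color membership constraints common to all `(k,d)`-total colorings:
colors of `X`-vertices are multiples of `d`, colors of `Y`-vertices and of edges lie in
`{k + jd : j ≥ 0}`. -/
def KDTotalVertexCond {V : Type} (G : SimpleGraph V) (X Y : Set V) (k d : ℕ)
    (fV : V → ℕ) (fE : Sym2 V → ℕ) : Prop :=
  (∀ x ∈ X, d ∣ fV x) ∧
  (∀ y ∈ Y, ∃ j : ℕ, fV y = k + j * d) ∧
  (∀ ⦃u v : V⦄, G.Adj u v → ∃ j : ℕ, fE s(u, v) = k + j * d)

/-- The set of colors used on the edges of `G`. -/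
def EdgeColorSet {V : Type} (G : SimpleGraph V) (fE : Sym2 V → ℕ) : Set ℕ :=
  {c : ℕ | ∃ u v : V, G.Adj u v ∧ fE s(u, v) = c}

/-- The set `{k + jd : 0 ≤ j ≤ q - 1}`. -/
def ArithProgSet (k d q : ℕ) : Set ℕ := {c : ℕ | ∃ j : ℕ, j < q ∧ c = k + j * d}

/-- The odd set `{k + (2j - 1)d : 1 ≤ j ≤ q}`. -/
def OddArithProgSet (k d q : ℕ) : Set ℕ :=
  {c : ℕ | ∃ j : ℕ, 1 ≤ j ∧ j ≤ q ∧ c = k + (2 * j - 1) * d}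

/-- A graceful `(k,d)`-total coloring of `G` (with bipartition `(X,Y)` and `q` edges). -/
def GracefulKDTotalColoring {V : Type} (G : SimpleGraph V) (X Y : Set V) (k d q : ℕ)
    (fV : V → ℕ) (fE : Sym2 V → ℕ) : Prop :=
  KDTotalVertexCond G X Y k d fV fE ∧
  (∀ ⦃u v : V⦄, G.Adj u v → fE s(u, v) = Nat.dist (fV u) (fV v)) ∧
  EdgeColorSet G fE = ArithProgSet k d q

/-- A harmonious `(k,d)`-total coloring of `G`:
`f(uv) - k ≡ f(u) + f(v) - k (mod qd)` for every edge `uv`. -/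
def HarmoniousKDTotalColoring {V : Type} (G : SimpleGraph V) (X Y : Set V) (k d q : ℕ)
    (fV : V → ℕ) (fE : Sym2 V → ℕ) : Prop :=
  KDTotalVertexCond G X Y k d fV fE ∧
  (∀ ⦃u v : V⦄, G.Adj u v →
    Int.ModEq ((q * d : ℕ) : ℤ) ((fE s(u, v) : ℤ) - (k : ℤ))
      (((fV u : ℤ) + (fV v : ℤ)) - (k : ℤ))) ∧
  EdgeColorSet G fE = ArithProgSet k d q

/-- An edge-magic `(k,d)`-total coloring: `f(u) + f(uv) + f(v)` is constant. -/
def EdgeMagicKDTotalColoring {V : Type} (G : SimpleGraph V) (X Y : Set V) (k d q : ℕ)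
    (fV : V → ℕ) (fE : Sym2 V → ℕ) : Prop :=
  KDTotalVertexCond G X Y k d fV fE ∧
  (∃ c : ℕ, ∀ ⦃u v : V⦄, G.Adj u v → fV u + fE s(u, v) + fV v = c) ∧
  EdgeColorSet G fE = ArithProgSet k d q

/-- An edge-difference `(k,d)`-total coloring: `f(uv) + |f(u) - f(v)|` is constant. -/
def EdgeDifferenceKDTotalColoring {V : Type} (G : SimpleGraph V) (X Y : Set V) (k d q : ℕ)
    (fV : V → ℕ) (fE : Sym2 V → ℕ) : Prop :=
  KDTotalVertexCond G X Y k d fV fE ∧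
  (∃ c : ℕ, ∀ ⦃u v : V⦄, G.Adj u v → fE s(u, v) + Nat.dist (fV u) (fV v) = c) ∧
  EdgeColorSet G fE = ArithProgSet k d q

/-- A graceful-difference `(k,d)`-total coloring: `||f(u) - f(v)| - f(uv)|` is constant. -/
def GracefulDifferenceKDTotalColoring {V : Type} (G : SimpleGraph V) (X Y : Set V) (k d q : ℕ)
    (fV : V → ℕ) (fE : Sym2 V → ℕ) : Prop :=
  KDTotalVertexCond G X Y k d fV fE ∧
  (∃ c : ℕ, ∀ ⦃u v : V⦄, G.Adj u v →
    ((Nat.dist (fV u) (fV v) : ℤ) - (fE s(u, v) : ℤ)).natAbs = c) ∧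
  EdgeColorSet G fE = ArithProgSet k d q

/-- A felicitous-difference `(k,d)`-total coloring: `|f(u) + f(v) - f(uv)|` is constant. -/
def FelicitousDifferenceKDTotalColoring {V : Type} (G : SimpleGraph V) (X Y : Set V) (k d q : ℕ)
    (fV : V → ℕ) (fE : Sym2 V → ℕ) : Prop :=
  KDTotalVertexCond G X Y k d fV fE ∧
  (∃ c : ℕ, ∀ ⦃u v : V⦄, G.Adj u v →
    (((fV u : ℤ) + (fV v : ℤ)) - (fE s(u, v) : ℤ)).natAbs = c) ∧
  EdgeColorSet G fE = ArithProgSet k d q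

/-- An edge-antimagic `(k,d)`-total coloring: the sums `f(u) + f(uv) + f(v)` over the edges
form the set `{2k + 2(a+j)d : 0 ≤ j ≤ q - 1}` for some `a ≥ 0`. -/
def EdgeAntimagicKDTotalColoring {V : Type} (G : SimpleGraph V) (X Y : Set V) (k d q : ℕ)
    (fV : V → ℕ) (fE : Sym2 V → ℕ) : Prop :=
  KDTotalVertexCond G X Y k d fV fE ∧
  ∃ a : ℕ, {c : ℕ | ∃ u v : V, G.Adj u v ∧ fV u + fE s(u, v) + fV v = c}
      = {c : ℕ | ∃ j : ℕ, j < q ∧ c = 2 * k + 2 * (a + j) * d}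

/-- An odd-edge graceful-difference `(k,d)`-total coloring. -/
def OddEdgeGracefulDifferenceKDTotalColoring {V : Type} (G : SimpleGraph V) (X Y : Set V)
    (k d q : ℕ) (fV : V → ℕ) (fE : Sym2 V → ℕ) : Prop :=
  KDTotalVertexCond G X Y k d fV fE ∧
  (∃ c : ℕ, ∀ ⦃u v : V⦄, G.Adj u v →
    ((Nat.dist (fV u) (fV v) : ℤ) - (fE s(u, v) : ℤ)).natAbs = c) ∧
  EdgeColorSet G fE = OddArithProgSet k d q

/-- An odd-edge edge-difference `(k,d)`-total coloring. -/
def OddEdgeEdgeDifferenceKDTotalColoring {V : Type} (G : SimpleGraph V) (X Y : Set V)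
    (k d q : ℕ) (fV : V → ℕ) (fE : Sym2 V → ℕ) : Prop :=
  KDTotalVertexCond G X Y k d fV fE ∧
  (∃ c : ℕ, ∀ ⦃u v : V⦄, G.Adj u v → fE s(u, v) + Nat.dist (fV u) (fV v) = c) ∧
  EdgeColorSet G fE = OddArithProgSet k d q

/-- An odd-edge edge-magic `(k,d)`-total coloring. -/
def OddEdgeEdgeMagicKDTotalColoring {V : Type} (G : SimpleGraph V) (X Y : Set V)
    (k d q : ℕ) (fV : V → ℕ) (fE : Sym2 V → ℕ) : Prop :=
  KDTotalVertexCond G X Y k d fV fE ∧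
  (∃ c : ℕ, ∀ ⦃u v : V⦄, G.Adj u v → fV u + fE s(u, v) + fV v = c) ∧
  EdgeColorSet G fE = OddArithProgSet k d q

/-- An odd-edge felicitous-difference `(k,d)`-total coloring. -/
def OddEdgeFelicitousDifferenceKDTotalColoring {V : Type} (G : SimpleGraph V) (X Y : Set V)
    (k d q : ℕ) (fV : V → ℕ) (fE : Sym2 V → ℕ) : Prop :=
  KDTotalVertexCond G X Y k d fV fE ∧
  (∃ c : ℕ, ∀ ⦃u v : V⦄, G.Adj u v →
    (((fV u : ℤ) + (fV v : ℤ)) - (fE s(u, v) : ℤ)).natAbs = c) ∧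
  EdgeColorSet G fE = OddArithProgSet k d q

/-- A set-ordered graceful labeling of `G` (with bipartition `(X,Y)` and `q` edges):
an injective map into `{0, …, q}` whose induced edge labels `|f(u) - f(v)|` are exactly
`{1, …, q}`, with `max f(X) < min f(Y)`. -/
def SetOrderedGracefulLabeling {V : Type} (G : SimpleGraph V) (X Y : Set V)
    (f : V → ℕ) (q : ℕ) : Prop :=
  Function.Injective f ∧ (∀ v : V, f v ≤ q) ∧
  (∀ x ∈ X, ∀ y ∈ Y, f x < f y) ∧
  {c : ℕ | ∃ u v : V, G.Adj u v ∧ Nat.dist (f u) (f v) = c} = Set.Icc 1 q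

/-!
A forest has no cycles, so every antisymmetric function on its darts is the gradient of a vertex
function. Apply this to the function which is `w` on darts from `X` to `Y` and `-w` on the reversed
ones, for `w` any prescribed natural weight on the edges, and shift the potential so that it becomes
nonnegative: this gives `g : V → ℕ` with `g y - g x = w(xy)`. Coloring `x ∈ X` by `g x * d` and
`y ∈ Y` by `k + g y * d` makes the difference along each edge exactly `k + w(xy) * d`, so if the
edges receive these differences as colors, the constant `c` is `0`. Since `w` is arbitrary, the edge
colors can be chosen to fill either of the two progressions.
-/

section Forest

variable {V A : Type*} [AddGroup A] {G : SimpleGraph V}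

theorem darts_sum_eq_add_of_isAcyclic (hG : G.IsAcyclic) {ω : V → V → A}
    (hω : ∀ ⦃u v : V⦄, G.Adj u v → ω v u = -ω u v) {r u v : V} (huv : G.Adj u v)
    {p : G.Walk r u} {q : G.Walk r v} (hp : p.IsPath) (hq : q.IsPath) :
    (q.darts.map fun e ↦ ω e.fst e.snd).sum = (p.darts.map fun e ↦ ω e.fst e.snd).sum + ω u v := by
  by_cases hu : u ∈ q.support
  · rw [hG.path_concat hp hq huv hu]
    simp only [SimpleGraph.Walk.darts_concat, List.concat_eq_append, List.map_append,
      List.map_cons, List.map_nil, List.sum_append, List.sum_singleton]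
  · have hv : v ∈ p.support := hG.mem_support_of_ne_mem_support_of_adj_of_isPath hp hq huv hu
    rw [hG.path_concat hq hp huv.symm hv]
    simp only [SimpleGraph.Walk.darts_concat, List.concat_eq_append, List.map_append,
      List.map_cons, List.map_nil, List.sum_append, List.sum_singleton, hω huv,
      neg_add_cancel_right]

theorem exists_potential_of_isAcyclic (hG : G.IsAcyclic) {ω : V → V → A}
    (hω : ∀ ⦃u v : V⦄, G.Adj u v → ω v u = -ω u v) :
    ∃ g : V → A, ∀ ⦃u v : V⦄, G.Adj u v → g v = g u + ω u v := by
  let root (v : V) : V := (G.connectedComponentMk v).out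
  have exists_path (v : V) : ∃ p : G.Walk (root v) v, p.IsPath :=
    (SimpleGraph.ConnectedComponent.exact (Quot.out_eq _)).exists_isPath
  choose p hp using exists_path
  refine ⟨fun v ↦ ((p v).darts.map fun e ↦ ω e.fst e.snd).sum, fun u v huv ↦ ?_⟩
  have root_eq : root u = root v :=
    congrArg Quot.out (SimpleGraph.ConnectedComponent.sound huv.reachable)
  have hpu : ((p u).copy root_eq rfl).IsPath := (SimpleGraph.Walk.isPath_copy _ _ _).2 (hp u)
  simpa only [SimpleGraph.Walk.darts_copy] using
    darts_sum_eq_add_of_isAcyclic hG hω huv hpu (hp v)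

end Forest

theorem exists_image_eq_Iio_ncard {α : Type*} {s : Set α} (hs : s.Finite) :
    ∃ w : α → ℕ, w '' s = Set.Iio s.ncard := by
  have h_encard : s.encard = (Set.Iio s.ncard).encard := by
    rw [← hs.cast_ncard_eq, ← (Set.finite_Iio s.ncard).cast_ncard_eq, Set.ncard_Iio_nat]
  obtain ⟨w, hw⟩ := hs.exists_bijOn_of_encard_eq h_encard
  exact ⟨w, hw.image_eq⟩

theorem arithProgSet_eq_image (k d q : ℕ) :
    ArithProgSet k d q = (fun j ↦ k + j * d) '' Set.Iio q := by
  ext c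
  simp only [ArithProgSet, Set.mem_ofPred_eq, Set.mem_image, Set.mem_Iio, eq_comm]

theorem oddArithProgSet_eq_image (k d q : ℕ) :
    OddArithProgSet k d q = (fun j ↦ k + (2 * j + 1) * d) '' Set.Iio q := by
  ext c
  constructor
  · rintro ⟨j, hj, hjq, rfl⟩
    obtain ⟨i, rfl⟩ := Nat.exists_eq_add_of_le' hj
    exact ⟨i, hjq, rfl⟩
  · rintro ⟨j, hj, rfl⟩
    exact ⟨j + 1, Nat.le_add_left 1 j, hj, rfl⟩

theorem edgeColorSet_eq_image {V : Type} (G : SimpleGraph V) (fE : Sym2 V → ℕ) :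
    EdgeColorSet G fE = fE '' G.edgeSet := by
  ext c
  simp only [EdgeColorSet, Set.mem_ofPred_eq, Set.mem_image, Sym2.exists,
    SimpleGraph.mem_edgeSet]

section Bipartition

variable {V : Type} {G : SimpleGraph V} {X Y : Set V}

theorem exists_isBipartitionOf_of_isBipartite (hG : G.IsBipartite) :
    ∃ X Y : Set V, IsBipartitionOf G X Y := by
  obtain ⟨s, t, hst⟩ := SimpleGraph.isBipartite_iff_exists_isBipartiteWith.1 hG
  refine ⟨s, sᶜ, fun v ↦ em (v ∈ s), disjoint_compl_right, fun u v huv ↦ ?_⟩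
  exact (hst.mem_of_adj huv).imp (And.imp_right fun hv ↦ hst.disjoint.notMem_of_mem_right hv)
    (And.imp_left fun hu ↦ hst.disjoint.notMem_of_mem_right hu)

namespace IsBipartitionOf

theorem notMem_left (hXY : IsBipartitionOf G X Y) {y : V} (hy : y ∈ Y) : y ∉ X :=
  hXY.2.1.notMem_of_mem_right hy

theorem exists_nat_potential [Finite V] (hXY : IsBipartitionOf G X Y) (hG : G.IsAcyclic)
    (w : Sym2 V → ℕ) :
    ∃ g : V → ℕ, ∀ ⦃x y : V⦄, x ∈ X → G.Adj x y → g y = g x + w s(x, y) := by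
  classical
  let ω (u v : V) : ℤ := if u ∈ X then w s(u, v) else -w s(u, v)
  have antisymm : ∀ ⦃u v : V⦄, G.Adj u v → ω v u = -ω u v := by
    intro u v huv
    rcases hXY.2.2 huv with ⟨hu, hv⟩ | ⟨hu, hv⟩
    · simp only [ω, hu, hXY.notMem_left hv, if_true, if_false, Sym2.eq_swap]
    · simp only [ω, hv, hXY.notMem_left hu, if_true, if_false, Sym2.eq_swap, neg_neg]
  obtain ⟨h, h_step⟩ := exists_potential_of_isAcyclic hG antisymm
  obtain ⟨m, hm⟩ := (Set.finite_range h).bddBelow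
  refine ⟨fun v ↦ (h v - m).toNat, fun x y hx hxy ↦ ?_⟩
  have hmx : m ≤ h x := hm ⟨x, rfl⟩
  have hxy' : h y = h x + w s(x, y) := by simpa only [ω, hx, if_true] using h_step hxy
  change (h y - m).toNat = (h x - m).toNat + w s(x, y)
  omega

theorem exists_vertexColoring_dist_eq [Finite V] (hXY : IsBipartitionOf G X Y)
    (hG : G.IsAcyclic) (k d : ℕ) (w : Sym2 V → ℕ) :
    ∃ f : V → ℕ, KDTotalVertexCond G X Y k d f (fun e ↦ k + w e * d) ∧
      ∀ ⦃u v : V⦄, G.Adj u v → Nat.dist (f u) (f v) = k + w s(u, v) * d := by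
  classical
  obtain ⟨g, hg⟩ := hXY.exists_nat_potential hG w
  let f (v : V) : ℕ := if v ∈ X then g v * d else k + g v * d
  have f_left {x : V} (hx : x ∈ X) : f x = g x * d := if_pos hx
  have f_right {y : V} (hy : y ∈ Y) : f y = k + g y * d := if_neg (hXY.notMem_left hy)
  have f_step {x y : V} (hx : x ∈ X) (hy : y ∈ Y) (hxy : G.Adj x y) :
      f y = f x + (k + w s(x, y) * d) := by
    rw [f_left hx, f_right hy, hg hx hxy]
    ring
  refine ⟨f, ⟨fun x hx ↦ ⟨g x, (f_left hx).trans (mul_comm _ _)⟩, fun y hy ↦ ⟨g y, f_right hy⟩,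
    fun u v _ ↦ ⟨w s(u, v), rfl⟩⟩, fun u v huv ↦ ?_⟩
  rcases hXY.2.2 huv with ⟨hu, hv⟩ | ⟨hu, hv⟩
  · rw [f_step hu hv huv, Nat.dist_eq_sub_of_le (Nat.le_add_right _ _), Nat.add_sub_cancel_left]
  · rw [f_step hv hu huv.symm, Nat.dist_eq_sub_of_le_right (Nat.le_add_right _ _),
      Nat.add_sub_cancel_left, Sym2.eq_swap]

theorem exists_totalColoring_edgeColorSet_eq [Finite V] (hXY : IsBipartitionOf G X Y)
    (hG : G.IsAcyclic) (k d : ℕ) (m : ℕ → ℕ) :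
    ∃ (fV : V → ℕ) (fE : Sym2 V → ℕ), KDTotalVertexCond G X Y k d fV fE ∧
      (∃ c : ℕ, ∀ ⦃u v : V⦄, G.Adj u v →
        ((Nat.dist (fV u) (fV v) : ℤ) - (fE s(u, v) : ℤ)).natAbs = c) ∧
      EdgeColorSet G fE = (fun j ↦ k + m j * d) '' Set.Iio (Nat.card G.edgeSet) := by
  obtain ⟨w, hw⟩ := exists_image_eq_Iio_ncard G.edgeSet.toFinite
  obtain ⟨fV, hcond, hdist⟩ := hXY.exists_vertexColoring_dist_eq hG k d (m ∘ w)
  refine ⟨fV, _, hcond, ⟨0, fun u v huv ↦ ?_⟩, ?_⟩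
  · rw [hdist huv, sub_self, Int.natAbs_zero]
  · rw [edgeColorSet_eq_image, Nat.card_coe_set_eq, ← hw, Set.image_image]
    rfl

end IsBipartitionOf

end Bipartition

theorem tree_graceful_difference_kd_total_colorings_general {V : Type} [Finite V]
    {T : SimpleGraph V} (hT : T.IsAcyclic) {X Y : Set V} (hXY : IsBipartitionOf T X Y) (k d : ℕ) :
    (∃ (fV : V → ℕ) (fE : Sym2 V → ℕ),
        GracefulDifferenceKDTotalColoring T X Y k d (Nat.card T.edgeSet) fV fE) ∧
    (∃ (fV : V → ℕ) (fE : Sym2 V → ℕ),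
        OddEdgeGracefulDifferenceKDTotalColoring T X Y k d (Nat.card T.edgeSet) fV fE) := by
  simp only [GracefulDifferenceKDTotalColoring, OddEdgeGracefulDifferenceKDTotalColoring,
    arithProgSet_eq_image, oddArithProgSet_eq_image]
  exact ⟨hXY.exists_totalColoring_edgeColorSet_eq hT k d fun j ↦ j,
    hXY.exists_totalColoring_edgeColorSet_eq hT k d fun j ↦ 2 * j + 1⟩

/-- Every tree with at least one edge admits a graceful-difference
`(k,d)`-total coloring and an odd-edge graceful-difference `(k,d)`-total coloring. -/
theorem tree_graceful_difference_kd_total_colorings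
    {V : Type} [Fintype V] [DecidableEq V]
    (T : SimpleGraph V) (hT : T.IsTree)
    (hq : 1 ≤ Nat.card T.edgeSet)
    (k d : ℕ) (hk : 1 ≤ k) (hd : 1 ≤ d) :
    (∃ (X Y : Set V) (fV : V → ℕ) (fE : Sym2 V → ℕ),
        IsBipartitionOf T X Y ∧
        GracefulDifferenceKDTotalColoring T X Y k d (Nat.card T.edgeSet) fV fE) ∧
    (∃ (X Y : Set V) (fV : V → ℕ) (fE : Sym2 V → ℕ),
        IsBipartitionOf T X Y ∧
        OddEdgeGracefulDifferenceKDTotalColoring T X Y k d (Nat.card T.edgeSet) fV fE) := by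
  obtain ⟨X, Y, hXY⟩ := exists_isBipartitionOf_of_isBipartite hT.isBipartite
  obtain ⟨⟨fV, fE, hf⟩, gV, gE, hg⟩ :=
    tree_graceful_difference_kd_total_colorings_general hT.isAcyclic hXY k d
  exact ⟨⟨X, Y, fV, fE, hXY, hf⟩, X, Y, gV, gE, hXY, hg⟩
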